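/- Let d ≥ 1, ᾱ ∈ (0,1), let 𝒴 be a finite nonempty label set, and let κ be a Markov kernel from ℝ^d to 𝒴. For x ∈ ℝ^d let A_x = (N(√ᾱ·x, (1−ᾱ)·I_d)).bind κ be the output label distribution of the randomized algorithm on input x. Suppose c_A ∈ 𝒴 and p_A, p_B ∈ (0,1) satisfy A_x({c_A}) ≥ p_A ≥ p_B ≥ max_{c ≠ c_A} A_x({c}). Then for every Δx ∈ ℝ^d with ‖Δx‖₂ < (√(1−ᾱ)/(2·√ᾱ))·(Φ⁻¹(p_A) − Φ⁻¹(p_B)), one has A_{x+Δx}({c_A}) > A_{x+Δx}({c}) for every c ≠ c_A; i.e., the smoothed classifier Ã(x') = argmax_{c} A_{x'}({c}) returns c_A at x + Δx. -/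

import Mathlib

open MeasureTheory ProbabilityTheory Real

/-- The Gaussian probability measure `N(m, σ² I_d)` on `ℝ^d`, given by its Lebesgue density. -/
noncomputable def gaussian (d : ℕ) (m : EuclideanSpace ℝ (Fin d)) (σ2 : ℝ) :
    Measure (EuclideanSpace ℝ (Fin d)) :=
  volume.withDensity fun x => ENNReal.ofReal
    ((2 * π * σ2) ^ (-(d : ℝ) / 2) * Real.exp (-‖x - m‖ ^ 2 / (2 * σ2)))

/-- The standard normal cumulative distribution function `Φ`. -/
noncomputable def stdNormalCDF (x : ℝ) : ℝ := (gaussianReal 0 1 (Set.Iic x)).toReal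

/-- The inverse `Φ⁻¹` of the standard normal cumulative distribution function. -/
noncomputable def stdNormalCDFInv : ℝ → ℝ := Function.invFun stdNormalCDF

/-!
Passing from `x` to `x + Δx` translates the Gaussian by `δ = √ᾱ • Δx`. By the Neyman–Pearson lemma,
among all tests accepted with a given probability under `N(m, v I)`, the one least accepted under
`N(m + δ, v I)` is the indicator of a half-space orthogonal to `δ`, for which both probabilities are
values of `Φ` whose arguments differ by `‖δ‖ / √v`. Applied to the top class and to the complement
of a competing class, this moves `Φ⁻¹` of either probability by at most `‖δ‖ / √v`, which is less
than half of the gap `Φ⁻¹ pA - Φ⁻¹ pB`.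
-/

open scoped ENNReal NNReal RealInnerProductSpace

section NeymanPearson

variable {X : Type*} [MeasurableSpace X] {μ : Measure X} {f : X → ℝ≥0∞} {H : Set X}

lemma setLIntegral_one_sub_le_setLIntegral_compl (hH : MeasurableSet H) (hHfin : μ H ≠ ∞)
    (hf : Measurable f) (hf1 : ∀ z, f z ≤ 1) (h : μ H ≤ ∫⁻ z, f z ∂μ) :
    ∫⁻ z in H, (1 - f z) ∂μ ≤ ∫⁻ z in Hᶜ, f z ∂μ := by
  have hfin : ∫⁻ z in H, f z ∂μ ≠ ∞ :=
    ne_top_of_le_ne_top hHfin ((lintegral_mono hf1).trans_eq (setLIntegral_one H))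
  refine (ENNReal.add_le_add_iff_left hfin).1 ?_
  calc ∫⁻ z in H, f z ∂μ + ∫⁻ z in H, (1 - f z) ∂μ
      = ∫⁻ z in H, f z + (1 - f z) ∂μ := (lintegral_add_left hf _).symm
    _ = μ H := by simp only [add_tsub_cancel_of_le (hf1 _), setLIntegral_one]
    _ ≤ ∫⁻ z, f z ∂μ := h
    _ = ∫⁻ z in H, f z ∂μ + ∫⁻ z in Hᶜ, f z ∂μ := (lintegral_add_compl f hH).symm

/-- The Neyman–Pearson lemma, with likelihood ratio `ℓ` and randomized test `f`. -/
lemma withDensity_apply_le_lintegral_withDensity {ℓ : X → ℝ≥0∞} {K : ℝ≥0∞} (hℓ : Measurable ℓ)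
    (hH : MeasurableSet H) (hHfin : μ H ≠ ∞) (hle : ∀ z ∈ H, ℓ z ≤ K) (hge : ∀ z ∈ Hᶜ, K ≤ ℓ z)
    (hf : Measurable f) (hf1 : ∀ z, f z ≤ 1) (h : μ H ≤ ∫⁻ z, f z ∂μ) :
    μ.withDensity ℓ H ≤ ∫⁻ z, f z ∂μ.withDensity ℓ := by
  have hsplit (z : X) : ℓ z = ℓ z * f z + ℓ z * (1 - f z) := by
    rw [← mul_add, add_tsub_cancel_of_le (hf1 z), mul_one]
  calc μ.withDensity ℓ H
      = ∫⁻ z in H, ℓ z ∂μ := withDensity_apply ℓ hH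
    _ = ∫⁻ z in H, ℓ z * f z ∂μ + ∫⁻ z in H, ℓ z * (1 - f z) ∂μ :=
        (lintegral_congr hsplit).trans (lintegral_add_left (hℓ.mul hf) _)
    _ ≤ ∫⁻ z in H, ℓ z * f z ∂μ + ∫⁻ z in H, K * (1 - f z) ∂μ := by
        refine add_le_add_right ?_ _
        exact setLIntegral_mono' hH fun z hz => mul_le_mul_left (hle z hz) _
    _ ≤ ∫⁻ z in H, ℓ z * f z ∂μ + ∫⁻ z in Hᶜ, K * f z ∂μ := by
        rw [lintegral_const_mul K (by fun_prop), lintegral_const_mul K hf]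
        refine add_le_add_right (mul_le_mul_right ?_ K) _
        exact setLIntegral_one_sub_le_setLIntegral_compl hH hHfin hf hf1 h
    _ ≤ ∫⁻ z in H, ℓ z * f z ∂μ + ∫⁻ z in Hᶜ, ℓ z * f z ∂μ := by
        refine add_le_add_right ?_ _
        exact setLIntegral_mono' hH.compl fun z hz => mul_le_mul_left (hge z hz) _
    _ = ∫⁻ z, ℓ z * f z ∂μ := lintegral_add_compl _ hH
    _ = ∫⁻ z, f z ∂μ.withDensity ℓ := (lintegral_withDensity_eq_lintegral_mul μ hℓ hf).symm

end NeymanPearson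

section CDF

variable (μ : Measure ℝ) [IsProbabilityMeasure μ]

lemma continuous_cdf [NullSingletonClass μ] : Continuous (cdf μ) := by
  refine continuous_iff_continuousAt.2 fun x => ?_
  rw [(monotone_cdf μ).continuousAt_iff_leftLim_eq_rightLim, StieltjesFunction.rightLim_eq]
  have hjump : ENNReal.ofReal (cdf μ x - Function.leftLim (cdf μ) x) = 0 := by
    rw [← StieltjesFunction.measure_singleton, measure_cdf, measure_singleton]
  exact le_antisymm ((monotone_cdf μ).leftLim_le le_rfl)
    (sub_nonpos.1 (ENNReal.ofReal_eq_zero.1 hjump))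

lemma Ioo_subset_range_cdf [NullSingletonClass μ] : Set.Ioo 0 1 ⊆ Set.range (cdf μ) := by
  intro p hp
  obtain ⟨a, ha⟩ := ((tendsto_cdf_atBot μ).eventually (gt_mem_nhds hp.1)).exists
  obtain ⟨b, hb⟩ := ((tendsto_cdf_atTop μ).eventually (lt_mem_nhds hp.2)).exists
  exact mem_range_of_exists_le_of_exists_ge (continuous_cdf μ) ⟨a, ha.le⟩ ⟨b, hb.le⟩

lemma strictMono_cdf [μ.IsOpenPosMeasure] : StrictMono (cdf μ) := by
  intro a b hab
  have hpos : 0 < μ.real (Set.Ioc a b) := ENNReal.toReal_pos_iff.2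
    ⟨((Measure.measure_Ioo_pos μ).2 hab).trans_le (measure_mono Set.Ioo_subset_Ioc_self),
      measure_lt_top _ _⟩
  rw [cdf_eq_real, cdf_eq_real, ← Set.Iic_union_Ioc_eq_Iic hab.le,
    measureReal_union (Set.Iic_disjoint_Ioc le_rfl) measurableSet_Ioc]
  exact lt_add_of_pos_right _ hpos

lemma cdf_neg_of_map_neg_eq [NullSingletonClass μ] (hμ : μ.map (fun x => -x) = μ) (x : ℝ) :
    cdf μ (-x) = 1 - cdf μ x := by
  have hpre : (fun y : ℝ => -y) ⁻¹' Set.Iic (-x) = Set.Ici x := by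
    ext y
    simp only [Set.mem_preimage, Set.mem_Iic, Set.mem_Ici, neg_le_neg_iff]
  calc cdf μ (-x)
      = μ.real (Set.Iic (-x)) := cdf_eq_real μ _
    _ = (μ.map fun y => -y).real (Set.Iic (-x)) := by rw [hμ]
    _ = μ.real (Set.Ici x) := by
        rw [map_measureReal_apply measurable_neg measurableSet_Iic, hpre]
    _ = μ.real (Set.Iic x)ᶜ := by rw [Set.compl_Iic, measureReal_congr Ioi_ae_eq_Ici]
    _ = 1 - cdf μ x := by rw [probReal_compl_eq_one_sub measurableSet_Iic, cdf_eq_real]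

end CDF

section StandardNormal

lemma isOpenPosMeasure_gaussianReal (μ : ℝ) {v : ℝ≥0} (hv : v ≠ 0) :
    (gaussianReal μ v).IsOpenPosMeasure :=
  (gaussianReal_absolutelyContinuous' μ hv).isOpenPosMeasure

lemma gaussianReal_Iic_add_sqrt_mul (μ : ℝ) {v : ℝ≥0} (hv : v ≠ 0) (t : ℝ) :
    gaussianReal μ v (Set.Iic (μ + √v * t)) = gaussianReal 0 1 (Set.Iic t) := by
  have hsqrt : 0 < √(v : ℝ) := Real.sqrt_pos.2 (NNReal.coe_pos.2 (pos_iff_ne_zero.2 hv))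
  have hmap : (gaussianReal 0 1).map (fun x => μ + √v * x) = gaussianReal μ v := by
    rw [← Function.comp_def (fun x => μ + x) (fun x => √v * x),
      ← Measure.map_map (by fun_prop) (by fun_prop), gaussianReal_map_const_mul,
      gaussianReal_map_const_add]
    congr 1
    · simp
    · ext
      simp
  rw [← hmap, Measure.map_apply (by fun_prop) measurableSet_Iic]
  congr 1
  ext x
  simp only [Set.mem_preimage, Set.mem_Iic, add_le_add_iff_left, mul_le_mul_iff_right₀ hsqrt]

lemma stdNormalCDF_eq_cdf : stdNormalCDF = cdf (gaussianReal 0 1) :=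
  funext fun t => (cdf_eq_real (gaussianReal 0 1) t).symm

lemma strictMono_stdNormalCDF : StrictMono stdNormalCDF := by
  have := isOpenPosMeasure_gaussianReal 0 one_ne_zero
  exact stdNormalCDF_eq_cdf ▸ strictMono_cdf (gaussianReal 0 1)

lemma stdNormalCDF_neg (t : ℝ) : stdNormalCDF (-t) = 1 - stdNormalCDF t := by
  have := nullSingletonClass_gaussianReal (μ := 0) one_ne_zero
  rw [stdNormalCDF_eq_cdf]
  exact cdf_neg_of_map_neg_eq _ (by rw [gaussianReal_map_neg, neg_zero]) t

lemma stdNormalCDF_stdNormalCDFInv {p : ℝ} (hp : p ∈ Set.Ioo (0 : ℝ) 1) :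
    stdNormalCDF (stdNormalCDFInv p) = p := by
  have := nullSingletonClass_gaussianReal (μ := 0) one_ne_zero
  have hrange : p ∈ Set.range stdNormalCDF :=
    stdNormalCDF_eq_cdf ▸ Ioo_subset_range_cdf (gaussianReal 0 1) hp
  exact Function.invFun_eq hrange

end StandardNormal

section Gaussian

variable {d : ℕ} {m : EuclideanSpace ℝ (Fin d)} {v : ℝ}

lemma integral_gaussian_eq_integral_smul {E : Type*} [NormedAddCommGroup E] [NormedSpace ℝ E]
    (hv : 0 < v) (f : EuclideanSpace ℝ (Fin d) → E) :
    ∫ z, f z ∂gaussian d m v =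
      ∫ z, ((2 * π * v) ^ (-(d : ℝ) / 2) * Real.exp (-‖z - m‖ ^ 2 / (2 * v))) • f z := by
  rw [gaussian, integral_withDensity_eq_integral_toReal_smul (by fun_prop) (by simp)]
  refine integral_congr_ae (.of_forall fun z => ?_)
  dsimp only
  rw [ENNReal.toReal_ofReal (by positivity)]

lemma charFun_gaussian (hv : 0 < v) (t : EuclideanSpace ℝ (Fin d)) :
    charFun (gaussian d m v) t = Complex.exp (⟪m, t⟫ * Complex.I - v * ‖t‖ ^ 2 / 2) := by
  set C : ℝ := (2 * π * v) ^ (-(d : ℝ) / 2) with hC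
  have hnorm : (C : ℂ) * (π / (1 / (2 * v) : ℝ)) ^ (d / 2 : ℂ) = 1 := by
    have hbase : (π / (1 / (2 * v) : ℝ) : ℂ) = (2 * π * v : ℝ) := by push_cast; field_simp
    have hexp : (d / 2 : ℂ) = (d / 2 : ℝ) := by push_cast; rfl
    rw [hbase, hexp, ← Complex.ofReal_cpow (by positivity), ← Complex.ofReal_mul, hC,
      ← Real.rpow_add (by positivity), neg_div, neg_add_cancel, Real.rpow_zero, Complex.ofReal_one]
  have hshift (y : EuclideanSpace ℝ (Fin d)) :
      (C * Real.exp (-‖y + m - m‖ ^ 2 / (2 * v))) • Complex.exp (⟪y + m, t⟫ * Complex.I) =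
        C * Complex.exp (⟪m, t⟫ * Complex.I) *
          Complex.exp (-(1 / (2 * v) : ℝ) * ‖y‖ ^ 2 + Complex.I * ⟪t, y⟫) := by
    rw [add_sub_cancel_right, Complex.real_smul, Complex.ofReal_mul, Complex.ofReal_exp, mul_assoc,
      mul_assoc, ← Complex.exp_add, ← Complex.exp_add, inner_add_left, real_inner_comm t y]
    congr 2
    push_cast
    ring
  calc charFun (gaussian d m v) t
      = ∫ z, (C * Real.exp (-‖z - m‖ ^ 2 / (2 * v))) • Complex.exp (⟪z, t⟫ * Complex.I) := by
        rw [charFun_apply, integral_gaussian_eq_integral_smul hv]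
    _ = ∫ y, C * Complex.exp (⟪m, t⟫ * Complex.I) *
          Complex.exp (-(1 / (2 * v) : ℝ) * ‖y‖ ^ 2 + Complex.I * ⟪t, y⟫) := by
        rw [← integral_add_right_eq_self _ m]
        exact integral_congr_ae (.of_forall hshift)
    _ = C * (π / (1 / (2 * v) : ℝ)) ^ (d / 2 : ℂ) * (Complex.exp (⟪m, t⟫ * Complex.I) *
          Complex.exp (Complex.I ^ 2 * ‖t‖ ^ 2 / (4 * (1 / (2 * v) : ℝ)))) := by
        rw [integral_const_mul, GaussianFourier.integral_cexp_neg_mul_sq_norm_add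
          (by rw [Complex.ofReal_re]; positivity), finrank_euclideanSpace_fin]
        ring
    _ = Complex.exp (⟪m, t⟫ * Complex.I - v * ‖t‖ ^ 2 / 2) := by
        rw [hnorm, one_mul, ← Complex.exp_add, Complex.I_sq]
        congr 1
        push_cast
        field_simp
        ring

lemma isProbabilityMeasure_gaussian (hv : 0 < v) : IsProbabilityMeasure (gaussian d m v) := by
  have hone : ((gaussian d m v).real Set.univ : ℂ) = 1 := by
    rw [← charFun_zero, charFun_gaussian hv]
    simp
  exact ⟨(ENNReal.toReal_eq_one_iff _).1 (Complex.ofReal_eq_one.1 hone)⟩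

lemma gaussian_map_inner (hv : 0 < v) (u : EuclideanSpace ℝ (Fin d)) :
    (gaussian d m v).map (fun z => ⟪u, z⟫) = gaussianReal ⟪u, m⟫ (v * ‖u‖ ^ 2).toNNReal := by
  have := isProbabilityMeasure_gaussian (m := m) hv
  refine Measure.ext_of_charFun (funext fun s => ?_)
  calc charFun ((gaussian d m v).map fun z => ⟪u, z⟫) s
      = charFun (gaussian d m v) (s • u) := by
        rw [charFun_apply_real, charFun_apply, integral_map (by fun_prop) (by fun_prop)]
        simp only [inner_smul_right, real_inner_comm u, Complex.ofReal_mul]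
    _ = charFun (gaussianReal ⟪u, m⟫ (v * ‖u‖ ^ 2).toNNReal) s := by
        rw [charFun_gaussian hv, charFun_gaussianReal, Real.coe_toNNReal _ (by positivity),
          inner_smul_right, real_inner_comm, norm_smul, Real.norm_eq_abs]
        congr 1
        have habs : ((|s| : ℝ) : ℂ) ^ 2 = (s : ℂ) ^ 2 := by norm_cast; exact sq_abs s
        push_cast
        rw [mul_pow, habs]
        ring

lemma gaussian_halfspace (hv : 0 < v) {u : EuclideanSpace ℝ (Fin d)} (hu : u ≠ 0) (t : ℝ) :
    gaussian d m v {z | ⟪u, z - m⟫ ≤ √v * ‖u‖ * t} = gaussianReal 0 1 (Set.Iic t) := by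
  have hvar : 0 < v * ‖u‖ ^ 2 := by positivity
  have hsqrt : √(v * ‖u‖ ^ 2).toNNReal = √v * ‖u‖ := by
    rw [Real.coe_toNNReal _ hvar.le, Real.sqrt_mul hv.le, Real.sqrt_sq (norm_nonneg u)]
  rw [← gaussianReal_Iic_add_sqrt_mul ⟪u, m⟫ (Real.toNNReal_pos.2 hvar).ne' t,
    ← gaussian_map_inner hv, Measure.map_apply (by fun_prop) measurableSet_Iic, hsqrt]
  congr 1
  ext z
  simp only [Set.mem_ofPred_eq, Set.mem_preimage, Set.mem_Iic, inner_sub_right, sub_le_iff_le_add']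

lemma gaussian_add_eq_withDensity (δ : EuclideanSpace ℝ (Fin d)) :
    gaussian d (m + δ) v = (gaussian d m v).withDensity fun z =>
      ENNReal.ofReal (Real.exp ((⟪δ, z - m⟫ - ‖δ‖ ^ 2 / 2) / v)) := by
  unfold gaussian
  rw [← withDensity_mul _ (by fun_prop) (by fun_prop)]
  congr 1
  ext z
  rw [Pi.mul_apply, ← ENNReal.ofReal_mul' (Real.exp_pos _).le, mul_assoc _ (Real.exp _),
    ← Real.exp_add, ← sub_sub, norm_sub_sq_real, real_inner_comm δ]
  congr 3
  ring

lemma gaussianReal_Iic_sub_le_lintegral_gaussian_add (hv : 0 < v)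
    {f : EuclideanSpace ℝ (Fin d) → ℝ≥0∞} (hf : Measurable f) (hf1 : ∀ z, f z ≤ 1)
    (δ : EuclideanSpace ℝ (Fin d)) {t : ℝ}
    (h : gaussianReal 0 1 (Set.Iic t) ≤ ∫⁻ z, f z ∂gaussian d m v) :
    gaussianReal 0 1 (Set.Iic (t - ‖δ‖ / √v)) ≤ ∫⁻ z, f z ∂gaussian d (m + δ) v := by
  obtain rfl | hδ := eq_or_ne δ 0
  · simpa using h
  set H : Set (EuclideanSpace ℝ (Fin d)) := {z | ⟪δ, z - m⟫ ≤ √v * ‖δ‖ * t} with hHdef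
  have hH : MeasurableSet H := measurableSet_le (by fun_prop) measurable_const
  have hmass : gaussian d m v H = gaussianReal 0 1 (Set.Iic t) := gaussian_halfspace hv hδ t
  have hmass_add : gaussian d (m + δ) v H = gaussianReal 0 1 (Set.Iic (t - ‖δ‖ / √v)) := by
    rw [← gaussian_halfspace (m := m + δ) hv hδ]
    congr 1
    ext z
    have hthreshold : √v * ‖δ‖ * (t - ‖δ‖ / √v) = √v * ‖δ‖ * t - ‖δ‖ ^ 2 := by field_simp
    rw [hHdef, Set.mem_ofPred_eq, Set.mem_ofPred_eq, hthreshold, ← sub_sub,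
      inner_sub_right δ (z - m), real_inner_self_eq_norm_sq, sub_le_sub_iff_right]
  rw [← hmass_add, gaussian_add_eq_withDensity]
  refine withDensity_apply_le_lintegral_withDensity
    (K := ENNReal.ofReal (Real.exp ((√v * ‖δ‖ * t - ‖δ‖ ^ 2 / 2) / v)))
    (by fun_prop) hH (by rw [hmass]; exact measure_ne_top _ _) (fun z hz => ?_) (fun z hz => ?_)
    hf hf1 (hmass.trans_le h)
  · have hz : ⟪δ, z - m⟫ ≤ √v * ‖δ‖ * t := hz
    gcongr
  · have hz : √v * ‖δ‖ * t < ⟪δ, z - m⟫ := not_le.1 hz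
    gcongr

end Gaussian

section RandomizedSmoothing

variable {d : ℕ} {m : EuclideanSpace ℝ (Fin d)} {v : ℝ} {Y : Type*} [MeasurableSpace Y]
  {κ : Kernel (EuclideanSpace ℝ (Fin d)) Y} [IsMarkovKernel κ] {S : Set Y}

lemma stdNormalCDF_sub_le_gaussian_add_bind (hv : 0 < v) (hS : MeasurableSet S)
    (δ : EuclideanSpace ℝ (Fin d)) {t : ℝ} (h : stdNormalCDF t ≤ ((gaussian d m v).bind κ).real S) :
    stdNormalCDF (t - ‖δ‖ / √v) ≤ ((gaussian d (m + δ) v).bind κ).real S := by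
  have := isProbabilityMeasure_gaussian (m := m) hv
  have := isProbabilityMeasure_gaussian (m := m + δ) hv
  have hbind (μ : Measure (EuclideanSpace ℝ (Fin d))) : μ.bind κ S = ∫⁻ z, κ z S ∂μ :=
    Measure.bind_apply hS κ.aemeasurable
  refine ENNReal.toReal_mono (measure_ne_top _ _) ?_
  rw [hbind]
  refine gaussianReal_Iic_sub_le_lintegral_gaussian_add hv (κ.measurable_coe hS)
    (fun z => prob_le_one) δ ?_
  rw [← hbind]
  exact (ENNReal.toReal_le_toReal (measure_ne_top _ _) (measure_ne_top _ _)).1 h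

lemma gaussian_add_bind_le_stdNormalCDF_add (hv : 0 < v) (hS : MeasurableSet S)
    (δ : EuclideanSpace ℝ (Fin d)) {t : ℝ} (h : ((gaussian d m v).bind κ).real S ≤ stdNormalCDF t) :
    ((gaussian d (m + δ) v).bind κ).real S ≤ stdNormalCDF (t + ‖δ‖ / √v) := by
  have := isProbabilityMeasure_gaussian (m := m) hv
  have := isProbabilityMeasure_gaussian (m := m + δ) hv
  have hcompl : stdNormalCDF (-t) ≤ ((gaussian d m v).bind κ).real Sᶜ := by
    rw [stdNormalCDF_neg, probReal_compl_eq_one_sub hS]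
    exact sub_le_sub_left h 1
  have hshift := stdNormalCDF_sub_le_gaussian_add_bind hv hS.compl δ hcompl
  rw [← neg_add', stdNormalCDF_neg, probReal_compl_eq_one_sub hS] at hshift
  exact (sub_le_sub_iff_left 1).1 hshift

end RandomizedSmoothing

theorem stmt9_general {d : ℕ} {ᾱ : ℝ} (hᾱ : ᾱ ∈ Set.Ioo (0 : ℝ) 1)
    {Y : Type*} [MeasurableSpace Y]
    {κ : Kernel (EuclideanSpace ℝ (Fin d)) Y} [IsMarkovKernel κ]
    {A : EuclideanSpace ℝ (Fin d) → Measure Y}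
    (hA : ∀ x, A x = (gaussian d (√ᾱ • x) (1 - ᾱ)).bind κ)
    {x : EuclideanSpace ℝ (Fin d)} {S T : Set Y} (hS : MeasurableSet S) (hT : MeasurableSet T)
    {pA pB : ℝ} (hpA : pA ∈ Set.Ioo (0 : ℝ) 1) (hpB : pB ∈ Set.Ioo (0 : ℝ) 1)
    (hAS : pA ≤ (A x).real S) (hAT : (A x).real T ≤ pB) {Δx : EuclideanSpace ℝ (Fin d)}
    (hΔx : ‖Δx‖ < √(1 - ᾱ) / (2 * √ᾱ) * (stdNormalCDFInv pA - stdNormalCDFInv pB)) :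
    (A (x + Δx)).real T < (A (x + Δx)).real S := by
  have hv : 0 < 1 - ᾱ := sub_pos.2 hᾱ.2
  have hα : 0 < √ᾱ := Real.sqrt_pos.2 hᾱ.1
  have hσ : 0 < √(1 - ᾱ) := Real.sqrt_pos.2 hv
  set r : ℝ := ‖√ᾱ • Δx‖ / √(1 - ᾱ) with hr
  have hradius : stdNormalCDFInv pB + r < stdNormalCDFInv pA - r := by
    rw [hr, norm_smul, Real.norm_of_nonneg hα.le]
    rw [div_mul_eq_mul_div, lt_div_iff₀ (by positivity)] at hΔx
    have hhalf : √ᾱ * ‖Δx‖ / √(1 - ᾱ) < (stdNormalCDFInv pA - stdNormalCDFInv pB) / 2 := by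
      rw [div_lt_iff₀ hσ]
      linarith
    linarith
  rw [hA, ← stdNormalCDF_stdNormalCDFInv hpA] at hAS
  rw [hA, ← stdNormalCDF_stdNormalCDFInv hpB] at hAT
  rw [hA, smul_add]
  calc ((gaussian d (√ᾱ • x + √ᾱ • Δx) (1 - ᾱ)).bind κ).real T
      ≤ stdNormalCDF (stdNormalCDFInv pB + r) :=
        gaussian_add_bind_le_stdNormalCDF_add hv hT _ hAT
    _ < stdNormalCDF (stdNormalCDFInv pA - r) := strictMono_stdNormalCDF hradius
    _ ≤ ((gaussian d (√ᾱ • x + √ᾱ • Δx) (1 - ᾱ)).bind κ).real S :=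
        stdNormalCDF_sub_le_gaussian_add_bind hv hS _ hAS

theorem stmt9 (d : ℕ) (hd : 1 ≤ d) (ᾱ : ℝ) (hᾱ : ᾱ ∈ Set.Ioo (0 : ℝ) 1)
    {Y : Type*} [MeasurableSpace Y] [MeasurableSingletonClass Y] [Fintype Y] [Nonempty Y]
    (κ : Kernel (EuclideanSpace ℝ (Fin d)) Y) [IsMarkovKernel κ]
    (A : EuclideanSpace ℝ (Fin d) → Measure Y)
    (hA : ∀ x, A x = (gaussian d (Real.sqrt ᾱ • x) (1 - ᾱ)).bind κ)
    (x : EuclideanSpace ℝ (Fin d)) (cA : Y) (pA pB : ℝ)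
    (hpA : pA ∈ Set.Ioo (0 : ℝ) 1) (hpB : pB ∈ Set.Ioo (0 : ℝ) 1)
    (h1 : pA ≤ ((A x) {cA}).toReal) (h2 : pB ≤ pA)
    (h3 : ∀ c : Y, c ≠ cA → ((A x) {c}).toReal ≤ pB) :
    ∀ Δx : EuclideanSpace ℝ (Fin d),
      ‖Δx‖ < (Real.sqrt (1 - ᾱ) / (2 * Real.sqrt ᾱ)) * (stdNormalCDFInv pA - stdNormalCDFInv pB) →
      ∀ c : Y, c ≠ cA → ((A (x + Δx)) {c}).toReal < ((A (x + Δx)) {cA}).toReal :=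
  fun _ hΔx c hc => stmt9_general hᾱ hA (measurableSet_singleton cA) (measurableSet_singleton c)
    hpA hpB h1 (h3 c hc) hΔx
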